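/- Let n ≥ 1, a > 1 and b = √(a² − 1). Let u : ℝⁿ → ℝ be a C² function satisfying (√(a²+1)/(2b)) · Σ_{i=1}^n ln((λ_i(D²u(x)) + a − b)/(λ_i(D²u(x)) + a + b)) = −u(x) + (1/2)⟨x, Du(x)⟩ for all x ∈ ℝⁿ, and suppose that either D²u(x) > −(a−b)I for every x ∈ ℝⁿ, or D²u(x) < −(a+b)I for every x ∈ ℝⁿ. Then u is a quadratic polynomial; more precisely, there exists a symmetric real n×n matrix A with eigenvalues λ̄₁, …, λ̄ₙ such that u(x) = −(√(a²+1)/(2b)) · Σ_{i=1}^n ln((λ̄_i + a − b)/(λ̄_i + a + b)) + (1/2)⟨x, Ax⟩ for all x ∈ ℝⁿ. -/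

import Mathlib

open Real Filter Matrix
open scoped RealInnerProductSpace

noncomputable section

/-- The Hessian matrix of `u` at `x`, with entries the second iterated derivatives
in the coordinate directions. -/
def Hess (n : ℕ) (u : EuclideanSpace ℝ (Fin n) → ℝ) (x : EuclideanSpace ℝ (Fin n)) :
    Matrix (Fin n) (Fin n) ℝ :=
  Matrix.of fun i j =>
    iteratedFDeriv ℝ 2 u x ![EuclideanSpace.single i 1, EuclideanSpace.single j 1]

open Classical in
/-- The eigenvalues of a real symmetric matrix (junk value `0` if not symmetric). -/
def eigs {n : ℕ} (A : Matrix (Fin n) (Fin n) ℝ) : Fin n → ℝ :=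
  if h : A.IsHermitian then h.eigenvalues else 0

/-- `u` is a quadratic polynomial:
`u x = (1/2)⟨x, A x⟩ + ⟨β, x⟩ + c` with `A` symmetric. -/
def IsQuadPoly (n : ℕ) (u : EuclideanSpace ℝ (Fin n) → ℝ) : Prop :=
  ∃ (A : Matrix (Fin n) (Fin n) ℝ) (β : EuclideanSpace ℝ (Fin n)) (c : ℝ), A.IsSymm ∧
    ∀ x, u x = (1/2) * (∑ i, ∑ j, A i j * x i * x j) + ⟪β, x⟫ + c

/-!
Adding a multiple of `‖x‖²`, after a change of sign in the second case, makes `u` a convex solution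
`w` of a shrinker equation whose operator `∑ k log (μᵢ / (μᵢ + d))` is elliptic, concave and
nonpositive. Parabolic rescalings of `w` have the same Hessians, so comparing `w` with them by
concavity shows that the phase `-w + ½ ⟨x, Dw⟩` is a subsolution of the linearised operator with
drift. As `w` grows at least linearly, the drift confines the maximum principle: the phase attains
its supremum and is therefore constant. Then `u` is, up to a constant, homogeneous of degree two,
hence quadratic.
-/

open scoped Topology

section SecondDerivative

variable {E F : Type*} [NormedAddCommGroup E] [NormedSpace ℝ E]
  [NormedAddCommGroup F] [NormedSpace ℝ F] {f g : E → ℝ} {x v : E}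

lemma hasDerivAt_comp_add_smul {f : E → F} {t : ℝ} (hf : DifferentiableAt ℝ f (x + t • v)) :
    HasDerivAt (fun s : ℝ => f (x + s • v)) (fderiv ℝ f (x + t • v) v) t :=
  hf.hasFDerivAt.comp_hasDerivAt t <| by
    simpa using ((hasDerivAt_id t).smul_const v).const_add x

lemma hasDerivAt_fderiv_comp_add_smul {t : ℝ}
    (hf : DifferentiableAt ℝ (fderiv ℝ f) (x + t • v)) :
    HasDerivAt (fun s : ℝ => fderiv ℝ f (x + s • v) v)
      (fderiv ℝ (fderiv ℝ f) (x + t • v) v v) t := by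
  simpa using (hasDerivAt_comp_add_smul hf).clm_apply (hasDerivAt_const t v)

lemma differentiable_fderiv_of_contDiff_two (hf : ContDiff ℝ 2 f) :
    Differentiable ℝ (fderiv ℝ f) :=
  (hf.fderiv_right (m := 1) le_rfl).differentiable one_ne_zero

lemma fderiv_fderiv_sub (hf : ContDiff ℝ 2 f) (hg : ContDiff ℝ 2 g) (x : E) :
    fderiv ℝ (fderiv ℝ (f - g)) x = fderiv ℝ (fderiv ℝ f) x - fderiv ℝ (fderiv ℝ g) x := by
  have h : fderiv ℝ (f - g) = fderiv ℝ f - fderiv ℝ g := funext fun y =>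
    fderiv_sub (hf.differentiable two_ne_zero y) (hg.differentiable two_ne_zero y)
  rw [h, fderiv_sub (differentiable_fderiv_of_contDiff_two hf x)
    (differentiable_fderiv_of_contDiff_two hg x)]

lemma fderiv_fderiv_const_smul (c : ℝ) (f : E → ℝ) (x : E) :
    fderiv ℝ (fderiv ℝ (c • f)) x = c • fderiv ℝ (fderiv ℝ f) x := by
  rw [fderiv_const_smul_field]
  exact congrFun (fderiv_const_smul_field (𝕜 := ℝ) (f := fderiv ℝ f) c) x

lemma fderiv_fderiv_comp_smul (c : ℝ) (f : E → ℝ) (x : E) :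
    fderiv ℝ (fderiv ℝ fun y => f (c • y)) x = c ^ 2 • fderiv ℝ (fderiv ℝ f) (c • x) := by
  have h : (fderiv ℝ fun y => f (c • y)) = c • fun y => fderiv ℝ f (c • y) :=
    funext fun y => fderiv_comp_smul c
  rw [h, sq, mul_smul, ← fderiv_comp_smul]
  exact congrFun (fderiv_const_smul_field (𝕜 := ℝ) (f := fun y => fderiv ℝ f (c • y)) c) x

lemma deriv_deriv_nonpos_of_isLocalMax {h : ℝ → ℝ} {t : ℝ} (hmax : IsLocalMax h t)
    (hc : ContinuousAt h t) : deriv (deriv h) t ≤ 0 := by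
  by_contra! hpos
  have hmin : IsLocalMin h t := isLocalMin_of_deriv_deriv_pos hpos hmax.deriv_eq_zero hc
  have hconst : h =ᶠ[𝓝 t] fun _ => h t := by
    filter_upwards [hmin, hmax] with s h₁ h₂ using le_antisymm h₂ h₁
  have : deriv (deriv h) t = 0 := by simpa using hconst.deriv.deriv_eq
  exact hpos.ne' this

lemma fderiv_fderiv_nonpos_of_isLocalMax (hf : ContDiff ℝ 2 f) (hmax : IsLocalMax f x) (v : E) :
    fderiv ℝ (fderiv ℝ f) x v v ≤ 0 := by
  have hline : Continuous fun t : ℝ => x + t • v := by fun_prop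
  have hmax' : IsLocalMax (fun t : ℝ => f (x + t • v)) 0 := by
    have : Tendsto (fun t : ℝ => x + t • v) (𝓝 0) (𝓝 x) := by simpa using hline.tendsto 0
    simpa [IsLocalMax, IsMaxFilter] using this.eventually hmax
  have hderiv : deriv (fun t : ℝ => f (x + t • v)) = fun t => fderiv ℝ f (x + t • v) v :=
    funext fun t => (hasDerivAt_comp_add_smul (hf.differentiable two_ne_zero _)).deriv
  have hsnd := hasDerivAt_fderiv_comp_add_smul (t := 0) (v := v)
    (differentiable_fderiv_of_contDiff_two hf (x + (0 : ℝ) • v))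
  have := deriv_deriv_nonpos_of_isLocalMax hmax' (hf.continuous.comp hline).continuousAt
  rw [hderiv, hsnd.deriv] at this
  simpa using this

lemma add_fderiv_lt_of_fderiv_fderiv_pos (hf : ContDiff ℝ 2 f)
    (hpos : ∀ x v, v ≠ 0 → 0 < fderiv ℝ (fderiv ℝ f) x v v) (x : E) (hv : v ≠ 0) :
    f x + fderiv ℝ f x v < f (x + v) := by
  have hf₁ (t : ℝ) := hasDerivAt_comp_add_smul (hf.differentiable two_ne_zero (x + t • v))
  have hf₂ (t : ℝ) :=
    hasDerivAt_fderiv_comp_add_smul (differentiable_fderiv_of_contDiff_two hf (x + t • v))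
  have hmono : StrictMono fun t : ℝ => fderiv ℝ f (x + t • v) v :=
    strictMono_of_deriv_pos fun t => by
      rw [(hf₂ t).deriv]
      exact hpos _ _ hv
  obtain ⟨t, ht, hslope⟩ := exists_hasDerivAt_eq_slope (fun t : ℝ => f (x + t • v)) _ zero_lt_one
    (fun s _ => (hf₁ s).continuousAt.continuousWithinAt) fun s _ => hf₁ s
  have hlt := hmono ht.1
  simp only [zero_smul, add_zero, one_smul, sub_zero, div_one] at hlt hslope
  linarith

lemma add_fderiv_le_of_fderiv_fderiv_pos (hf : ContDiff ℝ 2 f)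
    (hpos : ∀ x v, v ≠ 0 → 0 < fderiv ℝ (fderiv ℝ f) x v v) (x v : E) :
    f x + fderiv ℝ f x v ≤ f (x + v) := by
  rcases eq_or_ne v 0 with rfl | hv
  · simp
  · exact (add_fderiv_lt_of_fderiv_fderiv_pos hf hpos x hv).le

lemma exists_mul_norm_le_sub_tangent [ProperSpace E] (hf : ContDiff ℝ 2 f)
    (hpos : ∀ x v, v ≠ 0 → 0 < fderiv ℝ (fderiv ℝ f) x v v) :
    ∃ c > 0, ∀ x : E, 1 ≤ ‖x‖ → c * ‖x‖ ≤ f x - f 0 - fderiv ℝ f 0 x := by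
  obtain ⟨c, hc, hmin⟩ := (isCompact_sphere (0 : E) 1).exists_forall_le'
    (f := fun x => f x - f 0 - fderiv ℝ f 0 x) (a := 0)
    (((hf.continuous.sub continuous_const).sub (fderiv ℝ f 0).continuous).continuousOn)
    fun x hx => by
      have := add_fderiv_lt_of_fderiv_fderiv_pos hf hpos 0
        (Metric.ne_of_mem_sphere hx one_ne_zero)
      rw [zero_add] at this
      linarith
  refine ⟨c, hc, fun x hx => ?_⟩
  have hx₀ : ‖x‖ ≠ 0 := by positivity
  obtain ⟨y, hy, hxy⟩ : ∃ y : E, ‖y‖ = 1 ∧ x = ‖x‖ • y :=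
    ⟨‖x‖⁻¹ • x, by simp [norm_smul, hx₀], by simp [smul_smul, hx₀]⟩
  have hlow := hmin y (by simpa using hy)
  have htan₀ := add_fderiv_le_of_fderiv_fderiv_pos hf hpos y (-y)
  have htan := add_fderiv_le_of_fderiv_fderiv_pos hf hpos y ((‖x‖ - 1) • y)
  have hend : y + (‖x‖ - 1) • y = x := by
    conv_rhs => rw [hxy]
    module
  have hlin : fderiv ℝ f 0 x = ‖x‖ * fderiv ℝ f 0 y := by
    conv_lhs => rw [hxy]
    simp
  simp only [hend, add_neg_cancel, map_neg, map_smul, smul_eq_mul] at htan₀ htan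
  rw [hlin]
  nlinarith

end SecondDerivative

section Phase

variable {E : Type*} [NormedAddCommGroup E] [NormedSpace ℝ E] {w : E → ℝ} {x : E}

/-- The right-hand side `-w + ½ ⟨x, Dw⟩` of the shrinker equation; for the potential of a
self-shrinking Lagrangian graph it is the Lagrangian phase. -/
def phase (w : E → ℝ) (x : E) : ℝ :=
  -w x + 1 / 2 * fderiv ℝ w x x

/-- The parabolic rescaling `x ↦ r⁻² w (r x)`, which preserves the Hessian up to dilation. -/
def rescale (w : E → ℝ) (r : ℝ) (x : E) : ℝ :=
  w (r • x) / r ^ 2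

/-- The difference quotient at scale `1` of the family `rescale w`, normalised so that it converges
to `phase w`. It is as smooth as `w`, whereas `phase w` loses one derivative. -/
def scalingQuotient (w : E → ℝ) (r : ℝ) : E → ℝ :=
  (2 * (r - 1))⁻¹ • (rescale w r - w)

lemma continuous_phase (hw : ContDiff ℝ 1 w) : Continuous (phase w) :=
  hw.continuous.neg.add <| continuous_const.mul <|
    (hw.continuous_fderiv one_ne_zero).clm_apply continuous_id

lemma phase_sub_const (c : ℝ) : phase (fun y => w y - c) x = phase w x + c := by
  simp only [phase, fderiv_sub_const]
  ring

lemma contDiff_rescale {n : WithTop ℕ∞} (hw : ContDiff ℝ n w) (r : ℝ) :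
    ContDiff ℝ n (rescale w r) :=
  (hw.comp (contDiff_const_smul r)).div_const (r ^ 2)

lemma rescale_eq_smul (w : E → ℝ) (r : ℝ) : rescale w r = (r ^ 2)⁻¹ • fun x => w (r • x) := by
  ext x
  simp [rescale, div_eq_inv_mul]

lemma fderiv_rescale (w : E → ℝ) (r : ℝ) :
    fderiv ℝ (rescale w r) = (r ^ 2)⁻¹ • r • fun x => fderiv ℝ w (r • x) := by
  rw [rescale_eq_smul, fderiv_const_smul_field]
  ext1 x
  simp [fderiv_comp_smul]

lemma fderiv_fderiv_rescale (w : E → ℝ) {r : ℝ} (hr : r ≠ 0) (x : E) :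
    fderiv ℝ (fderiv ℝ (rescale w r)) x = fderiv ℝ (fderiv ℝ w) (r • x) := by
  rw [rescale_eq_smul, fderiv_fderiv_const_smul, fderiv_fderiv_comp_smul,
    inv_smul_smul₀ (pow_ne_zero 2 hr)]

lemma phase_rescale (w : E → ℝ) (r : ℝ) (x : E) :
    phase (rescale w r) x = phase w (r • x) / r ^ 2 := by
  simp only [phase, rescale, fderiv_rescale, Pi.smul_apply, _root_.smul_apply, map_smul,
    smul_eq_mul]
  ring

lemma contDiff_scalingQuotient {n : WithTop ℕ∞} (hw : ContDiff ℝ n w) (r : ℝ) :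
    ContDiff ℝ n (scalingQuotient w r) :=
  contDiff_const.mul ((contDiff_rescale hw r).sub hw)

lemma fderiv_scalingQuotient (hw : Differentiable ℝ w) (r : ℝ) :
    fderiv ℝ (scalingQuotient w r) =
      (2 * (r - 1))⁻¹ • (fderiv ℝ (rescale w r) - fderiv ℝ w) := by
  have hr : Differentiable ℝ (rescale w r) :=
    rescale_eq_smul w r ▸ (hw.comp (differentiable_id.const_smul r)).const_smul _
  rw [scalingQuotient, fderiv_const_smul_field]
  exact congrArg _ (funext fun x => fderiv_sub (hr x) (hw x))

lemma fderiv_fderiv_scalingQuotient (hw : ContDiff ℝ 2 w) {r : ℝ} (hr : r ≠ 0) (x : E) :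
    fderiv ℝ (fderiv ℝ (scalingQuotient w r)) x =
      (2 * (r - 1))⁻¹ • (fderiv ℝ (fderiv ℝ w) (r • x) - fderiv ℝ (fderiv ℝ w) x) := by
  rw [scalingQuotient, fderiv_fderiv_const_smul, fderiv_fderiv_sub (contDiff_rescale hw r) hw,
    fderiv_fderiv_rescale w hr]

lemma phase_scalingQuotient (hw : Differentiable ℝ w) (r : ℝ) (x : E) :
    phase (scalingQuotient w r) x = (2 * (r - 1))⁻¹ * (phase w (r • x) / r ^ 2 - phase w x) := by
  rw [← phase_rescale, phase, fderiv_scalingQuotient hw]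
  simp only [phase, scalingQuotient, Pi.smul_apply, Pi.sub_apply, _root_.smul_apply,
    _root_.sub_apply, smul_eq_mul]
  ring

lemma hasDerivAt_rescale (hw : Differentiable ℝ w) (x : E) {s : ℝ} (hs : s ≠ 0) :
    HasDerivAt (fun s : ℝ => rescale w s x) (2 * phase w (s • x) / s ^ 3) s := by
  have hcomp : HasDerivAt (fun s : ℝ => w (s • x)) (fderiv ℝ w (s • x) x) s := by
    simpa using hasDerivAt_comp_add_smul (x := (0 : E)) (t := s) (hw (0 + s • x))
  refine (hcomp.div (hasDerivAt_pow 2 s) (pow_ne_zero 2 hs)).congr_deriv ?_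
  simp only [phase, map_smul, smul_eq_mul]
  field_simp
  ring

end Phase

section ScalingLimit

variable {E : Type*} [NormedAddCommGroup E] [NormedSpace ℝ E] {w : E → ℝ} {K : Set E}

lemma tendstoUniformlyOn_mul_comp_smul {g : ℝ → ℝ} {φ : E → ℝ} (hg : ContinuousAt g 1)
    (hg₁ : g 1 = 1) (hφ : Continuous φ) (hK : IsCompact K) :
    TendstoUniformlyOn (fun r x => g r * φ (r • x)) φ (𝓝 1) K := by
  refine Metric.tendstoUniformlyOn_iff.2 fun ε hε => ?_
  refine hK.eventually_forall_of_forall_eventually fun x _ => ?_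
  have hcont : ContinuousAt (fun p : ℝ × E => dist (φ p.2) (g p.1 * φ (p.1 • p.2))) (1, x) := by
    have hg' : ContinuousAt (fun p : ℝ × E => g p.1) (1, x) :=
      ContinuousAt.comp (x := (1, x)) hg continuousAt_fst
    have hφ' : ContinuousAt (fun p : ℝ × E => φ (p.1 • p.2)) (1, x) := by fun_prop
    exact (hφ.continuousAt.comp' continuousAt_snd).dist (hg'.mul hφ')
  exact hcont.eventually_lt continuousAt_const (by simpa [hg₁] using hε)

lemma exists_scalingQuotient_eq (hw : Differentiable ℝ w) {r : ℝ} (hr : 1 < r) (x : E) :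
    ∃ s ∈ Set.Ioo 1 r, scalingQuotient w r x = (s ^ 3)⁻¹ * phase w (s • x) := by
  have hderiv (s : ℝ) (hs : 1 ≤ s) := hasDerivAt_rescale hw x (zero_lt_one.trans_le hs).ne'
  obtain ⟨s, hs, hslope⟩ := exists_hasDerivAt_eq_slope (fun s => rescale w s x) _ hr
    (fun s hs => (hderiv s hs.1).continuousAt.continuousWithinAt) fun s hs => hderiv s hs.1.le
  refine ⟨s, hs, ?_⟩
  have hone : rescale w 1 x = w x := by simp [rescale]
  have hr' : r - 1 ≠ 0 := (sub_pos.2 hr).ne'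
  have hs' : s ≠ 0 := (zero_lt_one.trans hs.1).ne'
  simp only [scalingQuotient, Pi.smul_apply, Pi.sub_apply, smul_eq_mul]
  rw [hone] at hslope
  field_simp at hslope ⊢
  linarith

lemma tendstoUniformlyOn_scalingQuotient (hw : ContDiff ℝ 1 w) (hK : IsCompact K) :
    TendstoUniformlyOn (scalingQuotient w) (phase w) (𝓝[>] 1) K := by
  have hcube : ContinuousAt (fun s : ℝ => (s ^ 3)⁻¹) 1 :=
    (continuousAt_id.pow 3).inv₀ (by norm_num)
  have hphase := tendstoUniformlyOn_mul_comp_smul hcube (by norm_num) (continuous_phase hw) hK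
  refine Metric.tendstoUniformlyOn_iff.2 fun ε hε => ?_
  obtain ⟨b, hb, hsub⟩ := mem_nhdsGT_iff_exists_Ioo_subset.1
    (mem_nhdsWithin_of_mem_nhds (Metric.tendstoUniformlyOn_iff.1 hphase ε hε))
  filter_upwards [Ioo_mem_nhdsGT hb] with r hr x hx
  obtain ⟨s, hs, heq⟩ := exists_scalingQuotient_eq (hw.differentiable one_ne_zero) hr.1 x
  rw [heq]
  exact hsub ⟨hs.1, hs.2.trans hr.2⟩ x hx

end ScalingLimit

section Comparison

variable {E : Type*} [NormedAddCommGroup E] [NormedSpace ℝ E] {w ψ : E → ℝ} {x : E} {K : Set E}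
  {L : E → (E →L[ℝ] E →L[ℝ] ℝ) →ₗ[ℝ] ℝ}

/-- The drift Laplacian `ψ ↦ L(D²ψ) - ½ ⟨x, Dψ⟩`: the linearisation of the shrinker equation when
the second-order operator is linearised to `L`. -/
def driftLaplacian (L : E → (E →L[ℝ] E →L[ℝ] ℝ) →ₗ[ℝ] ℝ) (ψ : E → ℝ) (x : E) : ℝ :=
  L x (fderiv ℝ (fderiv ℝ ψ) x) - 1 / 2 * fderiv ℝ ψ x x

/-- `w` solves a shrinker equation `Φ(D²w) = -w + ½ ⟨x, Dw⟩` with `Φ` elliptic and concave. The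
operator `Φ` enters only through its linearisation `L x` at `D²w x`: ellipticity is monotonicity of
`L x`, and concavity says that `Φ` lies below its tangents. -/
structure IsConcaveShrinker (w : E → ℝ) (L : E → (E →L[ℝ] E →L[ℝ] ℝ) →ₗ[ℝ] ℝ) : Prop where
  contDiff : ContDiff ℝ 2 w
  nonneg : ∀ x B, (∀ v, 0 ≤ B v v) → 0 ≤ L x B
  phase_le : ∀ x y,
    phase w y ≤ phase w x + L x (fderiv ℝ (fderiv ℝ w) y - fderiv ℝ (fderiv ℝ w) x)

namespace IsConcaveShrinker

lemma apply_mono (hw : IsConcaveShrinker w L) {A B : E →L[ℝ] E →L[ℝ] ℝ}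
    (hAB : ∀ v, A v v ≤ B v v) : L x A ≤ L x B :=
  sub_nonneg.1 <| (hw.nonneg x (B - A) fun v => sub_nonneg.2 (hAB v)).trans_eq (map_sub (L x) B A)

lemma le_driftLaplacian_scalingQuotient (hw : IsConcaveShrinker w L) {r : ℝ} (hr : 1 < r) (x : E) :
    (r + 1) / (2 * r ^ 2) * phase w (r • x) - scalingQuotient w r x ≤
      driftLaplacian L (scalingQuotient w r) x := by
  have hr₀ : 0 < r := zero_lt_one.trans hr
  have hr₁ : 0 < r - 1 := sub_pos.2 hr
  have hphase := phase_scalingQuotient (hw.contDiff.differentiable two_ne_zero) r x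
  have hsnd : (2 * (r - 1))⁻¹ * (phase w (r • x) - phase w x) ≤
      L x (fderiv ℝ (fderiv ℝ (scalingQuotient w r)) x) := by
    rw [fderiv_fderiv_scalingQuotient hw.contDiff hr₀.ne', map_smul, smul_eq_mul]
    gcongr
    linarith [hw.phase_le x (r • x)]
  have halg : (r + 1) / (2 * r ^ 2) * phase w (r • x) =
      (2 * (r - 1))⁻¹ * (phase w (r • x) - phase w x) -
        (2 * (r - 1))⁻¹ * (phase w (r • x) / r ^ 2 - phase w x) := by
    field_simp
    ring
  rw [phase] at hphase
  rw [driftLaplacian]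
  linarith

lemma driftLaplacian_le_of_isLocalMax (hw : IsConcaveShrinker w L) {f : E → ℝ}
    (hf : ContDiff ℝ 2 f) (hψ : ContDiff ℝ 2 ψ) (hmax : IsLocalMax (f - ψ) x) :
    driftLaplacian L f x ≤ driftLaplacian L ψ x := by
  have hfst : fderiv ℝ f x = fderiv ℝ ψ x := by
    have h := hmax.fderiv_eq_zero
    rw [fderiv_sub (hf.differentiable two_ne_zero x) (hψ.differentiable two_ne_zero x)] at h
    exact sub_eq_zero.1 h
  have hsnd : L x (fderiv ℝ (fderiv ℝ f) x) ≤ L x (fderiv ℝ (fderiv ℝ ψ) x) :=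
    hw.apply_mono fun v => by
      have h := fderiv_fderiv_nonpos_of_isLocalMax (f := f - ψ) (hf.sub hψ) hmax v
      rw [fderiv_fderiv_sub hf hψ] at h
      exact sub_nonpos.1 h
  rw [driftLaplacian, driftLaplacian, hfst]
  linarith

/-- If the bound fails at an interior maximum `x`, then `phase w` is nearly the scaling quotient
near `x`, which is a strict subsolution there. -/
theorem phase_sub_le_of_driftLaplacian_le (hw : IsConcaveShrinker w L) (hψ : ContDiff ℝ 2 ψ)
    (hK : IsCompact K) {η c : ℝ} (hη : 0 < η)
    (h : ∀ x ∈ K, phase w x - ψ x ≤ c ∨ x ∈ interior K ∧ driftLaplacian L ψ x ≤ -η) :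
    ∀ x ∈ K, phase w x - ψ x ≤ c := by
  intro x₀ hx₀
  by_contra! hlt
  obtain ⟨ε, hε, hεc, hεη⟩ : ∃ ε > 0, 2 * ε < phase w x₀ - ψ x₀ - c ∧ 2 * ε < η := by
    obtain ⟨ε, hε, hlt⟩ := exists_between (lt_min (sub_pos.2 hlt) hη)
    exact ⟨ε / 2, by positivity, by linarith [min_le_left (phase w x₀ - ψ x₀ - c) η],
      by linarith [min_le_right (phase w x₀ - ψ x₀ - c) η]⟩
  have hw₁ : ContDiff ℝ 1 w := hw.contDiff.of_le one_le_two
  have hcoef : ContinuousAt (fun r : ℝ => (r + 1) / (2 * r ^ 2)) 1 := by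
    refine ContinuousAt.div (by fun_prop) (by fun_prop) (by norm_num)
  have hQ := Metric.tendstoUniformlyOn_iff.1 (tendstoUniformlyOn_scalingQuotient hw₁ hK) ε hε
  have hφ := Metric.tendstoUniformlyOn_iff.1
    (tendstoUniformlyOn_mul_comp_smul hcoef (by norm_num) (continuous_phase hw₁) hK) ε hε
  obtain ⟨r, ⟨hQr, hφr⟩, hr : 1 < r⟩ :=
    ((hQ.and (hφ.filter_mono nhdsWithin_le_nhds)).and self_mem_nhdsWithin).exists
  simp only [Real.dist_eq, abs_sub_lt_iff] at hQr hφr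
  have hQ₂ := contDiff_scalingQuotient hw.contDiff r
  obtain ⟨x, hx, hmax⟩ := hK.exists_isMaxOn ⟨x₀, hx₀⟩ (hQ₂.sub hψ).continuous.continuousOn
  have hxc : c < phase w x - ψ x := by
    have hle : scalingQuotient w r x₀ - ψ x₀ ≤ scalingQuotient w r x - ψ x := hmax hx₀
    linarith [hQr x hx, hQr x₀ hx₀]
  obtain ⟨hint, hψx⟩ := (h x hx).resolve_left hxc.not_ge
  have hle := (hw.le_driftLaplacian_scalingQuotient hr x).trans
    (hw.driftLaplacian_le_of_isLocalMax hQ₂ hψ (hmax.isLocalMax (mem_interior_iff_mem_nhds.1 hint)))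
  linarith [hQr x hx, hφr x hx]

end IsConcaveShrinker

end Comparison

section Attainment

variable {E : Type*} [NormedAddCommGroup E] [NormedSpace ℝ E] {w : E → ℝ}
  {L : E → (E →L[ℝ] E →L[ℝ] ℝ) →ₗ[ℝ] ℝ}

lemma antitoneOn_rescale (hw : Differentiable ℝ w) (hphase : ∀ x, phase w x ≤ 0) (x : E) :
    AntitoneOn (fun s : ℝ => rescale w s x) (Set.Ioi 0) := by
  have hderiv (s : ℝ) (hs : 0 < s) := hasDerivAt_rescale hw x hs.ne'
  refine antitoneOn_of_hasDerivWithinAt_nonpos (convex_Ioi 0)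
    (fun s hs => (hderiv s hs).continuousAt.continuousWithinAt)
    (fun s hs => (hderiv s (interior_subset hs)).hasDerivWithinAt) fun s hs => ?_
  have hs : 0 < s := interior_subset hs
  exact div_nonpos_of_nonpos_of_nonneg (by linarith [hphase (s • x)]) (by positivity)

lemma nonneg_of_phase_nonpos (hw : Differentiable ℝ w) (hphase : ∀ x, phase w x ≤ 0)
    (htangent : ∀ v, w 0 + fderiv ℝ w 0 v ≤ w v) (x : E) : 0 ≤ w x := by
  have hlim : Tendsto (fun s : ℝ => w 0 * s⁻¹ ^ 2 + fderiv ℝ w 0 x * s⁻¹) atTop (𝓝 0) := by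
    simpa using ((tendsto_inv_atTop_zero.pow 2).const_mul (w 0)).add
      (tendsto_inv_atTop_zero.const_mul (fderiv ℝ w 0 x))
  refine le_of_tendsto hlim ?_
  filter_upwards [eventually_ge_atTop 1] with s hs
  have hs₀ : 0 < s := zero_lt_one.trans_le hs
  calc w 0 * s⁻¹ ^ 2 + fderiv ℝ w 0 x * s⁻¹ = (w 0 + fderiv ℝ w 0 (s • x)) / s ^ 2 := by
        rw [map_smul, smul_eq_mul]
        field_simp
    _ ≤ rescale w s x := div_le_div_of_nonneg_right (htangent (s • x)) (by positivity)
    _ ≤ rescale w 1 x := antitoneOn_rescale hw hphase x (Set.mem_Ioi.2 one_pos) hs₀ hs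
    _ = w x := by simp [rescale]

lemma driftLaplacian_const_smul (c : ℝ) (f : E → ℝ) (x : E) :
    driftLaplacian L (c • f) x = c * driftLaplacian L f x := by
  rw [driftLaplacian, fderiv_fderiv_const_smul, fderiv_const_smul_field, driftLaplacian]
  simp only [map_smul, Pi.smul_apply, _root_.smul_apply, smul_eq_mul]
  ring

lemma driftLaplacian_sub_clm {f : E → ℝ} (hf : ContDiff ℝ 2 f) (ℓ : E →L[ℝ] ℝ) (x : E) :
    driftLaplacian L (f - ℓ) x = driftLaplacian L f x + 1 / 2 * ℓ x := by
  have hℓ : fderiv ℝ (fderiv ℝ ℓ) x = 0 := by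
    rw [show fderiv ℝ ℓ = fun _ => ℓ from funext fun _ => ℓ.fderiv, fderiv_fun_const]
    rfl
  rw [driftLaplacian, driftLaplacian, fderiv_fderiv_sub hf ℓ.contDiff, hℓ, sub_zero,
    fderiv_sub (hf.differentiable two_ne_zero x) ℓ.differentiableAt, ℓ.fderiv, _root_.sub_apply]
  ring

namespace IsConcaveShrinker

variable [ProperSpace E]

lemma phase_sub_smul_le_of_lyapunov (hw : IsConcaveShrinker w L) {B : E → ℝ}
    (hB : ContDiff ℝ 2 B) (hB₀ : ∀ x, 0 ≤ B x) (hBlim : Tendsto B (Bornology.cobounded E) atTop)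
    {R m M : ℝ} (hLB : ∀ x, R ≤ ‖x‖ → driftLaplacian L B x ≤ -1)
    (hm : ∀ x, ‖x‖ ≤ R → phase w x ≤ m) (hM : ∀ x, phase w x ≤ M) {δ : ℝ} (hδ : 0 < δ) (x : E) :
    phase w x - δ * B x ≤ m := by
  obtain ⟨R', -, hR'⟩ := hasBasis_cobounded_norm.eventually_iff.1
    (hBlim.eventually_ge_atTop ((M - m) / δ))
  refine hw.phase_sub_le_of_driftLaplacian_le (contDiff_const.mul hB)
    (isCompact_closedBall 0 (max ‖x‖ R')) hδ (fun y hy => ?_) x (by simp)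
  rcases le_or_gt ‖y‖ R with hyR | hyR
  · left
    linarith [hm y hyR, mul_nonneg hδ.le (hB₀ y)]
  rcases (mem_closedBall_zero_iff.1 hy).lt_or_eq with hlt | heq
  · right
    refine ⟨Metric.ball_subset_interior_closedBall (mem_ball_zero_iff.2 hlt), ?_⟩
    change driftLaplacian L (δ • B) y ≤ -δ
    rw [driftLaplacian_const_smul]
    nlinarith [hLB y hyR.le]
  · left
    have hBy : (M - m) / δ ≤ B y := hR' (heq.ge.trans' (le_max_right _ _))
    rw [div_le_iff₀' hδ] at hBy
    linarith [hM y]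

theorem exists_forall_phase_le_of_lyapunov (hw : IsConcaveShrinker w L) {B : E → ℝ}
    (hB : ContDiff ℝ 2 B) (hB₀ : ∀ x, 0 ≤ B x) (hBlim : Tendsto B (Bornology.cobounded E) atTop)
    (hLB : ∀ᶠ x in Bornology.cobounded E, driftLaplacian L B x ≤ -1) {M : ℝ}
    (hM : ∀ x, phase w x ≤ M) : ∃ z, ∀ x, phase w x ≤ phase w z := by
  obtain ⟨R, -, hR⟩ := hasBasis_cobounded_norm.eventually_iff.1 hLB
  obtain ⟨z, -, hz⟩ := (isCompact_closedBall (0 : E) (max R 0)).exists_isMaxOn ⟨0, by simp⟩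
    (continuous_phase (hw.contDiff.of_le one_le_two)).continuousOn
  refine ⟨z, fun x => ?_⟩
  have hlim : Tendsto (fun δ : ℝ => phase w x - δ * B x) (𝓝[>] 0) (𝓝 (phase w x)) := by
    have h : Continuous fun δ : ℝ => phase w x - δ * B x := by fun_prop
    simpa using (h.tendsto 0).mono_left nhdsWithin_le_nhds
  refine le_of_tendsto hlim ?_
  filter_upwards [self_mem_nhdsWithin] with δ hδ
  exact hw.phase_sub_smul_le_of_lyapunov hB hB₀ hBlim
    (fun y hy => hR ((le_max_left R 0).trans hy)) (fun y hy => hz (by simpa using hy)) hM hδ x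

/-- The Lyapunov function is `2w - Dw(0)`: convexity of `w` makes it grow linearly, and the drift
term then dominates `L(D²w)`. -/
theorem exists_forall_phase_le (hw : IsConcaveShrinker w L)
    (hpos : ∀ x v, v ≠ 0 → 0 < fderiv ℝ (fderiv ℝ w) x v v) (hphase : ∀ x, phase w x ≤ 0)
    {C : ℝ} (hC : ∀ x, L x (fderiv ℝ (fderiv ℝ w) x) ≤ C) :
    ∃ z, ∀ x, phase w x ≤ phase w z := by
  have htangent := add_fderiv_le_of_fderiv_fderiv_pos hw.contDiff hpos
  have htangent₀ (x : E) : w 0 + fderiv ℝ w 0 x ≤ w x := by simpa using htangent 0 x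
  have hw₀ := nonneg_of_phase_nonpos (hw.contDiff.differentiable two_ne_zero) hphase htangent₀
  obtain ⟨c, hc, hgrowth⟩ := exists_mul_norm_le_sub_tangent hw.contDiff hpos
  have hnorm : Tendsto (fun x : E => c * ‖x‖) (Bornology.cobounded E) atTop :=
    tendsto_norm_cobounded_atTop.const_mul_atTop hc
  have hgrowth' : ∀ᶠ x in Bornology.cobounded E, c * ‖x‖ ≤ w x - w 0 - fderiv ℝ w 0 x :=
    (tendsto_norm_cobounded_atTop.eventually_ge_atTop 1).mono hgrowth
  have hsmul : ContDiff ℝ 2 ((2 : ℝ) • w) := contDiff_const.mul hw.contDiff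
  refine hw.exists_forall_phase_le_of_lyapunov (B := (2 : ℝ) • w - fderiv ℝ w 0)
    (hsmul.sub (fderiv ℝ w 0).contDiff) (fun x => ?_) (tendsto_atTop_mono' _ ?_ hnorm) ?_ hphase
  · simp only [Pi.sub_apply, Pi.smul_apply, smul_eq_mul]
    linarith [htangent₀ x, hw₀ x, hw₀ 0]
  · filter_upwards [hgrowth'] with x hx
    simp only [Pi.sub_apply, Pi.smul_apply, smul_eq_mul]
    linarith [hw₀ x, hw₀ 0]
  · filter_upwards [hgrowth', hnorm.eventually_ge_atTop (4 * C + w 0 + 2)] with x hx hx'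
    rw [driftLaplacian_sub_clm hsmul, driftLaplacian_const_smul, driftLaplacian]
    have hback := htangent x (-x)
    rw [add_neg_cancel, map_neg] at hback
    linarith [hC x, hw₀ x]

end IsConcaveShrinker

end Attainment

section StrongMaximum

lemma exists_closedBall_inter_eq_singleton {E : Type*} [NormedAddCommGroup E] [NormedSpace ℝ E]
    [StrictConvexSpace ℝ E] [ProperSpace E] {S : Set E} (hS : IsClosed S) (hne : S.Nonempty)
    {p : E} (hp : p ∉ S) :
    ∃ y z, z ≠ y ∧ Metric.closedBall y (dist z y) ∩ S = {z} := by
  obtain ⟨z, hz, hdist⟩ := hS.exists_infDist_eq_dist hne p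
  have hzp : p ≠ z := fun h => hp (h ▸ hz)
  have hleft : dist p (midpoint ℝ p z) = dist p z / 2 := by
    rw [dist_left_midpoint, Real.norm_two]
    ring
  have hright : dist z (midpoint ℝ p z) = dist p z / 2 := by
    rw [dist_right_midpoint, Real.norm_two]
    ring
  refine ⟨midpoint ℝ p z, z, fun h => ?_, Set.eq_singleton_iff_unique_mem.2
    ⟨⟨Metric.mem_closedBall.2 le_rfl, hz⟩, fun x ⟨hx, hxS⟩ => ?_⟩⟩
  · rw [← dist_eq_zero, hright] at h
    exact (dist_pos.2 hzp).ne' (by linarith)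
  rw [Metric.mem_closedBall, hright, dist_comm] at hx
  have hle : dist p z ≤ dist p x := hdist ▸ Metric.infDist_le_dist_of_mem hxS
  have htri := dist_triangle p (midpoint ℝ p z) x
  have hmid : midpoint ℝ p z = midpoint ℝ p x :=
    eq_midpoint_of_dist_eq_half (by linarith) (by linarith)
  exact ((AffineEquiv.pointReflection_midpoint_left (R := ℝ) p x).symm.trans (hmid ▸
    AffineEquiv.pointReflection_midpoint_left p z))

lemma exists_add_mul_le_neg {X : Type*} [TopologicalSpace X] {S : Set X} (hS : IsCompact S)
    {f g : X → ℝ} (hf : Continuous f) (hg : Continuous g) (hf₀ : ∀ x ∈ S, f x ≤ 0)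
    (hfg : ∀ x ∈ S, f x = 0 → g x < 0) : ∃ ε > 0, ∃ c < 0, ∀ x ∈ S, f x + ε * g x ≤ c := by
  obtain ⟨M, hM⟩ := hS.exists_bound_of_continuousOn hg.continuousOn
  obtain ⟨a, ha, hfa⟩ := (hS.inter_right (isClosed_le continuous_const hg)).exists_forall_le'
    (f := -f) (a := 0) hf.neg.continuousOn fun x ⟨hx, hgx⟩ =>
      neg_pos.2 ((hf₀ x hx).lt_of_ne fun h => (hfg x hx h).not_ge hgx)
  have hε : 0 < a / (|M| + 1) := by positivity
  have hneg : ∀ x ∈ S, 0 < -(f x + a / (|M| + 1) * g x) := fun x hx => by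
    rcases lt_or_ge (g x) 0 with hgx | hgx
    · linarith [hf₀ x hx, mul_neg_of_pos_of_neg hε hgx]
    · have hgM : g x < |M| + 1 := by
        linarith [(le_abs_self (g x)).trans (hM x hx), le_abs_self M]
      have hlt : a / (|M| + 1) * g x < a := by
        calc a / (|M| + 1) * g x < a / (|M| + 1) * (|M| + 1) := by gcongr
          _ = a := by field_simp
      have hfx : a ≤ -f x := hfa x ⟨hx, hgx⟩
      linarith
  obtain ⟨c, hc, hle⟩ := hS.exists_forall_le'
    (by fun_prop : ContinuousOn (fun x => -(f x + a / (|M| + 1) * g x)) S) hneg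
  exact ⟨_, hε, -c, neg_lt_zero.2 hc, fun x hx => by linarith [hle x hx]⟩

variable {E : Type*} [NormedAddCommGroup E] [InnerProductSpace ℝ E] {w : E → ℝ}
  {L : E → (E →L[ℝ] E →L[ℝ] ℝ) →ₗ[ℝ] ℝ}

/-- The inner product as a bilinear form: `innerSL ℝ`, retyped so that conjugate-linearity in the
first argument becomes linearity. -/
def innerForm (E : Type*) [NormedAddCommGroup E] [InnerProductSpace ℝ E] : E →L[ℝ] E →L[ℝ] ℝ :=
  innerSL ℝ

@[simp]
lemma innerForm_apply (x y : E) : innerForm E x y = ⟪x, y⟫ := rfl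

/-- The bilinear form `ξ ⊗ ξ : (v, v') ↦ ⟪ξ, v⟫ ⟪ξ, v'⟫`. -/
def tensorSq (ξ : E) : E →L[ℝ] E →L[ℝ] ℝ :=
  (innerForm E ξ).smulRight (innerForm E ξ)

/-- Ellipticity of the family of operators `L x`, locally uniform in `x`: the symbol at the covector
`ξ` is the value of `L x` at `ξ ⊗ ξ`, and the trace of the coefficients its value at the metric. -/
def IsLocallyElliptic (L : E → (E →L[ℝ] E →L[ℝ] ℝ) →ₗ[ℝ] ℝ) : Prop :=
  ∀ K : Set E, IsCompact K → ∃ θ > 0, ∃ Θ, ∀ x ∈ K,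
    (∀ ξ, θ * ‖ξ‖ ^ 2 ≤ L x (tensorSq ξ)) ∧ L x (innerForm E) ≤ Θ

/-- The Gaussian `x ↦ exp (-α ‖x - y‖²)` centred at `y`, the barrier of Hopf's lemma. -/
def gaussian (α : ℝ) (y x : E) : ℝ :=
  Real.exp (-α * ‖x - y‖ ^ 2)

lemma contDiff_gaussian (α : ℝ) (y : E) {n : WithTop ℕ∞} : ContDiff ℝ n (gaussian α y) :=
  (contDiff_const.mul ((contDiff_id.sub contDiff_const).norm_sq ℝ)).exp

lemma fderiv_gaussian (α : ℝ) (y : E) :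
    fderiv ℝ (gaussian α y) = fun x => (-2 * α * gaussian α y x) • innerForm E (x - y) := by
  ext x v
  have h : HasFDerivAt (gaussian α y) _ x :=
    (((hasFDerivAt_id x).sub_const y).norm_sq.const_mul (-α)).exp
  rw [h.fderiv]
  simp only [id, gaussian, ContinuousLinearMap.comp_id, _root_.smul_apply, smul_eq_mul,
    nsmul_eq_mul, Nat.cast_ofNat, innerSL_apply_apply, innerForm_apply]
  ring

lemma fderiv_fderiv_gaussian (α : ℝ) (y x : E) :
    fderiv ℝ (fderiv ℝ (gaussian α y)) x = gaussian α y x •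
      ((4 * α ^ 2) • tensorSq (x - y) + (-2 * α) • innerForm E) := by
  have hG : HasFDerivAt (gaussian α y) (fderiv ℝ (gaussian α y) x) x :=
    ((contDiff_gaussian α y).differentiable one_ne_zero x).hasFDerivAt
  have hinner : HasFDerivAt (fun x : E => innerForm E (x - y)) (innerForm E) x :=
    (innerForm E).hasFDerivAt.comp x ((hasFDerivAt_id x).sub_const y)
  rw [fderiv_gaussian] at hG ⊢
  refine ((hG.const_mul (-2 * α)).smul hinner).fderiv.trans ?_
  ext v v'
  simp [tensorSq]
  ring

lemma driftLaplacian_gaussian (α : ℝ) (y x : E) :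
    driftLaplacian L (gaussian α y) x = gaussian α y x * (4 * α ^ 2 * L x (tensorSq (x - y))
      - 2 * α * L x (innerForm E) + α * ⟪x - y, x⟫) := by
  rw [driftLaplacian, fderiv_fderiv_gaussian, fderiv_gaussian]
  simp only [map_smul, map_add, _root_.smul_apply, innerForm_apply, smul_eq_mul]
  ring

theorem IsLocallyElliptic.exists_le_driftLaplacian_gaussian (hL : IsLocallyElliptic L) {K : Set E}
    (hK : IsCompact K) {y : E} (hy : y ∉ K) :
    ∃ α > 0, ∃ η > 0, ∀ x ∈ K, η ≤ driftLaplacian L (gaussian α y) x := by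
  obtain ⟨θ, hθ, Θ, hΘ⟩ := hL K hK
  obtain ⟨r, hr, hdist⟩ := hK.exists_forall_le' (f := fun x => ‖x - y‖ ^ 2) (a := 0)
    (by fun_prop) fun x hx => by
      have : x - y ≠ 0 := sub_ne_zero.2 fun h => hy (h ▸ hx)
      positivity
  obtain ⟨D, hD⟩ := hK.exists_bound_of_continuousOn (f := fun x : E => ⟪x - y, x⟫) (by fun_prop)
  obtain ⟨α, hα, hαr⟩ : ∃ α > 0, 2 * Θ + D + 1 ≤ 4 * α * (θ * r) :=
    ⟨(|2 * Θ + D + 1| + 1) / (4 * (θ * r)), by positivity, by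
      field_simp
      linarith [le_abs_self (2 * Θ + D + 1)]⟩
  obtain ⟨η, hη, hle⟩ := hK.exists_forall_le' (f := fun x => gaussian α y x * α) (a := 0)
    ((contDiff_gaussian α y (n := 0)).continuous.mul_const α).continuousOn
    fun x _ => mul_pos (Real.exp_pos _) hα
  refine ⟨α, hα, η, hη, fun x hx => (hle x hx).trans ?_⟩
  rw [driftLaplacian_gaussian]
  refine mul_le_mul_of_nonneg_left ?_ (Real.exp_pos _).le
  have hsymbol : θ * r ≤ L x (tensorSq (x - y)) :=
    (mul_le_mul_of_nonneg_left (hdist x hx) hθ.le).trans ((hΘ x hx).1 (x - y))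
  have hbracket : 1 ≤ 4 * α * L x (tensorSq (x - y))
      - 2 * L x (innerForm E) + ⟪x - y, x⟫ := by
    have hdrift := (abs_le.1 (hD x hx)).1
    have hαsymbol := mul_le_mul_of_nonneg_left hsymbol (by positivity : 0 ≤ 4 * α)
    linarith [(hΘ x hx).2]
  nlinarith

/-- Hopf's argument: otherwise some ball touches the set of maximum points from outside at a single
point `z`, and near `z` a small multiple of a Gaussian centred in that ball makes the maximum
strict. -/
theorem IsConcaveShrinker.phase_eq_of_forall_le [FiniteDimensional ℝ E]
    (hw : IsConcaveShrinker w L) (hL : IsLocallyElliptic L) {p : E}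
    (hmax : ∀ x, phase w x ≤ phase w p) (x : E) : phase w x = phase w p := by
  have hcont := continuous_phase (hw.contDiff.of_le one_le_two)
  by_contra hx
  obtain ⟨y, z, hzy, htouch⟩ := exists_closedBall_inter_eq_singleton
    (isClosed_eq hcont continuous_const : IsClosed {x | phase w x = phase w p}) ⟨p, rfl⟩ hx
  have hz : phase w z = phase w p := (htouch.ge rfl).2
  have hρ : 0 < dist z y := dist_pos.2 hzy
  have hy : y ∉ Metric.closedBall z (dist z y / 2) := by
    rw [Metric.mem_closedBall, dist_comm]
    linarith
  obtain ⟨α, hα, η, hη, hbarrier⟩ :=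
    hL.exists_le_driftLaplacian_gaussian (isCompact_closedBall z (dist z y / 2)) hy
  have hG : ContDiff ℝ 2 (gaussian α y) := contDiff_gaussian α y
  obtain ⟨ε, hε, c, hc, hsphere⟩ := exists_add_mul_le_neg (isCompact_sphere z (dist z y / 2))
    (f := fun x => phase w x - phase w p) (g := fun x => gaussian α y x - gaussian α y z)
    (hcont.sub continuous_const) (hG.continuous.sub continuous_const)
    (fun x _ => sub_nonpos.2 (hmax x)) fun x hx hxp => by
      have hfar : dist z y < dist x y := by
        by_contra! hle
        have hxz : x = z := htouch.le ⟨hle, sub_eq_zero.1 hxp⟩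
        rw [Metric.mem_sphere, hxz, dist_self] at hx
        linarith
      rw [dist_eq_norm, dist_eq_norm] at hfar
      refine sub_neg.2 (Real.exp_lt_exp.2 ?_)
      nlinarith [pow_lt_pow_left₀ hfar (norm_nonneg _) two_ne_zero]
  have hcomp := hw.phase_sub_le_of_driftLaplacian_le (ψ := (-ε) • gaussian α y)
    (contDiff_const.mul hG) (isCompact_closedBall z (dist z y / 2)) (mul_pos hε hη)
    (c := phase w p + ε * gaussian α y z + c) (fun x hx => ?_) z
    (Metric.mem_closedBall_self (by positivity))
  · simp only [Pi.smul_apply, smul_eq_mul] at hcomp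
    linarith
  · rcases (Metric.mem_closedBall.1 hx).lt_or_eq with hlt | heq
    · right
      refine ⟨Metric.ball_subset_interior_closedBall hlt, ?_⟩
      rw [driftLaplacian_const_smul]
      nlinarith [hbarrier x hx]
    · left
      simp only [Pi.smul_apply, smul_eq_mul]
      linarith [hsphere x heq]

end StrongMaximum

section Eigenframe

variable {ι E : Type*} [Fintype ι] [NormedAddCommGroup E] [InnerProductSpace ℝ E]
  {A B : E →L[ℝ] E →L[ℝ] ℝ} {e f : OrthonormalBasis ι ℝ E} {μ ν c : ι → ℝ}

/-- The trace `∑ i, c i * B (e i) (e i)` of a bilinear form in an orthonormal frame, with weights: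
the linearisation of a spectral function at a form diagonal in the frame `e`. -/
def weightedTrace (e : OrthonormalBasis ι ℝ E) (c : ι → ℝ) : (E →L[ℝ] E →L[ℝ] ℝ) →ₗ[ℝ] ℝ where
  toFun B := ∑ i, c i * B (e i) (e i)
  map_add' A B := by simp [mul_add, Finset.sum_add_distrib]
  map_smul' t B := by simp [Finset.mul_sum, mul_left_comm]

/-- The orthonormal basis `e` diagonalises the bilinear form `B`, with eigenvalues `μ`. -/
def IsEigenframe (B : E →L[ℝ] E →L[ℝ] ℝ) (e : OrthonormalBasis ι ℝ E) (μ : ι → ℝ) : Prop :=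
  ∀ i y, B (e i) y = μ i * ⟪e i, y⟫

lemma weightedTrace_apply (e : OrthonormalBasis ι ℝ E) (c : ι → ℝ) (B : E →L[ℝ] E →L[ℝ] ℝ) :
    weightedTrace e c B = ∑ i, c i * B (e i) (e i) := rfl

lemma weightedTrace_innerForm : weightedTrace e c (innerForm E) = ∑ i, c i := by
  simp [weightedTrace_apply]

lemma weightedTrace_tensorSq (ξ : E) :
    weightedTrace e c (tensorSq ξ) = ∑ i, c i * ⟪ξ, e i⟫ ^ 2 := by
  simp [weightedTrace_apply, tensorSq, sq]

lemma mul_norm_sq_le_weightedTrace_tensorSq {θ : ℝ} (hθ : ∀ i, θ ≤ c i) (ξ : E) :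
    θ * ‖ξ‖ ^ 2 ≤ weightedTrace e c (tensorSq ξ) := by
  rw [weightedTrace_tensorSq, ← e.sum_sq_inner_left ξ, Finset.mul_sum]
  exact Finset.sum_le_sum fun i _ => mul_le_mul_of_nonneg_right (hθ i) (sq_nonneg _)

namespace IsEigenframe

lemma apply_self (hB : IsEigenframe B e μ) (i : ι) : B (e i) (e i) = μ i := by
  simp [hB i]

lemma neg (hB : IsEigenframe B e μ) : IsEigenframe (-B) e (-μ) := fun i y => by
  simp [hB i]

lemma add_smul_innerForm (hB : IsEigenframe B e μ) (t : ℝ) :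
    IsEigenframe (B + t • innerForm E) e fun i => μ i + t := fun i y => by
  simp [hB i, add_mul]

lemma apply_apply_self (hB : IsEigenframe B e μ) (v : E) : B v v = ∑ i, μ i * ⟪e i, v⟫ ^ 2 := by
  conv_lhs => rw [show B v = B (∑ i, ⟪e i, v⟫ • e i) by rw [e.sum_repr' v]]
  simp only [map_sum, map_smul, _root_.sum_apply, _root_.smul_apply, hB _, smul_eq_mul]
  exact Finset.sum_congr rfl fun i _ => by ring

lemma apply_apply_self_pos (hB : IsEigenframe B e μ) (hμ : ∀ i, 0 < μ i) {v : E} (hv : v ≠ 0) :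
    0 < B v v := by
  obtain ⟨i, hi⟩ : ∃ i, ⟪e i, v⟫ ≠ 0 := by
    by_contra! h
    exact hv (by rw [← e.sum_repr' v]; simp [h])
  rw [hB.apply_apply_self]
  exact Finset.sum_pos' (fun j _ => mul_nonneg (hμ j).le (sq_nonneg _))
    ⟨i, Finset.mem_univ i, mul_pos (hμ i) (by positivity)⟩

/-- The squares `⟪f j, e i⟫ ^ 2` form a doubly stochastic matrix, so the tangent inequality of the
profile `h` can be averaged against them. -/
theorem sum_le_add_weightedTrace (hA : IsEigenframe A e μ) (hB : IsEigenframe B f ν) {h : ℝ → ℝ}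
    (htangent : ∀ i j, h (ν j) ≤ h (μ i) + c i * (ν j - μ i)) :
    ∑ j, h (ν j) ≤ ∑ i, h (μ i) + weightedTrace e c (B - A) := by
  calc ∑ j, h (ν j) = ∑ j, ∑ i, ⟪f j, e i⟫ ^ 2 * h (ν j) :=
        Finset.sum_congr rfl fun j _ => by
          rw [← Finset.sum_mul, e.sum_sq_inner_left, f.norm_eq_one, one_pow, one_mul]
    _ ≤ ∑ j, ∑ i, ⟪f j, e i⟫ ^ 2 * (h (μ i) + c i * (ν j - μ i)) := by
        gcongr with j _ i _
        exact htangent i j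
    _ = ∑ i, ∑ j, ⟪f j, e i⟫ ^ 2 * (h (μ i) + c i * (ν j - μ i)) := Finset.sum_comm
    _ = ∑ i, (h (μ i) + c i * ((B - A) (e i) (e i))) := Finset.sum_congr rfl fun i _ => by
        have hrow : ∑ j, ⟪f j, e i⟫ ^ 2 = 1 := by
          rw [f.sum_sq_inner_right, e.norm_eq_one, one_pow]
        rw [_root_.sub_apply, _root_.sub_apply, hA.apply_self, hB.apply_apply_self]
        calc ∑ j, ⟪f j, e i⟫ ^ 2 * (h (μ i) + c i * (ν j - μ i)) =
            (∑ j, ⟪f j, e i⟫ ^ 2) * (h (μ i) - c i * μ i) + c i * ∑ j, ν j * ⟪f j, e i⟫ ^ 2 := by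
              rw [Finset.sum_mul, Finset.mul_sum, ← Finset.sum_add_distrib]
              exact Finset.sum_congr rfl fun j _ => by ring
          _ = _ := by
              rw [hrow]
              ring
    _ = ∑ i, h (μ i) + weightedTrace e c (B - A) := Finset.sum_add_distrib

end IsEigenframe

end Eigenframe

section LogShrinker

/-- The profile `t ↦ k log (t / (t + d))`, whose sum over the eigenvalues is the Lagrangian phase
operator for `τ ∈ (0, π/4)`, after a translation of the eigenvalues. -/
def logRatio (k d t : ℝ) : ℝ :=
  k * Real.log (t / (t + d))

/-- The derivative of `logRatio k d`. -/
def logRatioSlope (k d t : ℝ) : ℝ :=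
  k * d / (t * (t + d))

lemma logRatio_nonpos {k d t : ℝ} (hk : 0 ≤ k) (hd : 0 ≤ d) (ht : 0 < t) : logRatio k d t ≤ 0 :=
  mul_nonpos_of_nonneg_of_nonpos hk <|
    Real.log_nonpos (by positivity) (div_le_one_of_le₀ (by linarith) (by positivity))

lemma logRatio_le_tangent {k d s t : ℝ} (hk : 0 ≤ k) (hd : 0 ≤ d) (hs : 0 < s) (ht : 0 < t) :
    logRatio k d t ≤ logRatio k d s + logRatioSlope k d s * (t - s) := by
  have hlog : Real.log (t / (t + d)) - Real.log (s / (s + d)) ≤ d / (s * (s + d)) * (t - s) :=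
    calc Real.log (t / (t + d)) - Real.log (s / (s + d))
        = Real.log (t / (t + d) / (s / (s + d))) :=
          (Real.log_div (by positivity) (by positivity)).symm
      _ ≤ t / (t + d) / (s / (s + d)) - 1 := Real.log_le_sub_one_of_pos (by positivity)
      _ = d / (s * (s + d)) * (t - s) - d * (t - s) ^ 2 / (s * (s + d) * (t + d)) := by
          field_simp
          ring
      _ ≤ d / (s * (s + d)) * (t - s) := sub_le_self _ (by positivity)
  calc logRatio k d t
      = logRatio k d s + k * (Real.log (t / (t + d)) - Real.log (s / (s + d))) := by
        simp only [logRatio]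
        ring
    _ ≤ logRatio k d s + k * (d / (s * (s + d)) * (t - s)) := by gcongr
    _ = logRatio k d s + logRatioSlope k d s * (t - s) := by
        rw [logRatioSlope]
        ring

variable {ι E : Type*} [Fintype ι] [NormedAddCommGroup E] [InnerProductSpace ℝ E] {k d : ℝ}
  {w : E → ℝ} {e : E → OrthonormalBasis ι ℝ E} {μ : E → ι → ℝ} {x : E}

/-- `w` is a convex solution of `∑ k log (μᵢ / (μᵢ + d)) = -w + ½ ⟨x, Dw⟩`, where `μ x` are the
eigenvalues of `D²w x`, in the orthonormal frame `e x`. -/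
structure IsLogShrinker (k d : ℝ) (w : E → ℝ) (e : E → OrthonormalBasis ι ℝ E)
    (μ : E → ι → ℝ) : Prop where
  contDiff : ContDiff ℝ 2 w
  isEigenframe : ∀ x, IsEigenframe (fderiv ℝ (fderiv ℝ w) x) (e x) (μ x)
  pos : ∀ x i, 0 < μ x i
  phase_eq : ∀ x, phase w x = ∑ i, logRatio k d (μ x i)

/-- The linearisation at `D²w x` of the spectral function `∑ k log (μᵢ / (μᵢ + d))`, for a function
`w` whose Hessian is diagonal in the frame `e x` with eigenvalues `μ x`. -/
def logLinearization (k d : ℝ) (e : E → OrthonormalBasis ι ℝ E) (μ : E → ι → ℝ) (x : E) :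
    (E →L[ℝ] E →L[ℝ] ℝ) →ₗ[ℝ] ℝ :=
  weightedTrace (e x) fun i => logRatioSlope k d (μ x i)

namespace IsLogShrinker

lemma phase_nonpos (hw : IsLogShrinker k d w e μ) (hk : 0 ≤ k) (hd : 0 ≤ d) (x : E) :
    phase w x ≤ 0 :=
  (hw.phase_eq x).trans_le <|
    Finset.sum_nonpos fun i _ => logRatio_nonpos hk hd (hw.pos x i)

lemma isConcaveShrinker (hw : IsLogShrinker k d w e μ) (hk : 0 ≤ k) (hd : 0 ≤ d) :
    IsConcaveShrinker w (logLinearization k d e μ) where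
  contDiff := hw.contDiff
  nonneg x B hB := Finset.sum_nonneg fun i _ => by
    have := hw.pos x i
    exact mul_nonneg (div_nonneg (mul_nonneg hk hd) (by positivity)) (hB (e x i))
  phase_le x y := by
    rw [hw.phase_eq, hw.phase_eq]
    exact (hw.isEigenframe x).sum_le_add_weightedTrace (hw.isEigenframe y)
      fun i j => logRatio_le_tangent hk hd (hw.pos x i) (hw.pos y j)

lemma logLinearization_fderiv_fderiv_le (hw : IsLogShrinker k d w e μ) (hk : 0 ≤ k) (hd : 0 ≤ d)
    (x : E) : logLinearization k d e μ x (fderiv ℝ (fderiv ℝ w) x) ≤ Fintype.card ι * k := by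
  rw [logLinearization, weightedTrace_apply, ← nsmul_eq_mul]
  refine Finset.sum_le_card_nsmul _ _ _ fun i _ => ?_
  have hμ := hw.pos x i
  rw [(hw.isEigenframe x).apply_self, logRatioSlope]
  calc k * d / (μ x i * (μ x i + d)) * μ x i = k * (d / (μ x i + d)) := by field_simp
    _ ≤ k := mul_le_of_le_one_right hk (div_le_one_of_le₀ (by linarith) (by positivity))

lemma exp_mul_le_eigenvalue (hw : IsLogShrinker k d w e μ) (hk : 0 < k) (hd : 0 ≤ d) (i : ι) :
    Real.exp (phase w x / k) * d ≤ μ x i := by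
  classical
  have hμ := hw.pos x i
  have hle : phase w x ≤ logRatio k d (μ x i) := by
    rw [hw.phase_eq, Fintype.sum_eq_add_sum_compl i]
    linarith [Finset.sum_nonpos fun j (_ : j ∈ ({i}ᶜ : Finset ι)) =>
      logRatio_nonpos hk.le hd (hw.pos x j)]
  have hlog : phase w x / k ≤ Real.log (μ x i / (μ x i + d)) := (div_le_iff₀' hk).2 hle
  have hexp := (Real.le_log_iff_exp_le (by positivity)).1 hlog
  rw [le_div_iff₀ (by positivity)] at hexp
  nlinarith [Real.exp_pos (phase w x / k)]

lemma eigenvalue_le_norm (hw : IsLogShrinker k d w e μ) (x : E) (i : ι) :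
    μ x i ≤ ‖fderiv ℝ (fderiv ℝ w) x‖ := by
  rw [← (hw.isEigenframe x).apply_self i]
  refine (Real.le_norm_self _).trans ((ContinuousLinearMap.le_opNorm₂ _ _ _).trans ?_)
  simp

theorem isLocallyElliptic (hw : IsLogShrinker k d w e μ) (hk : 0 < k) (hd : 0 < d) :
    IsLocallyElliptic (logLinearization k d e μ) := fun K hK => by
  have hhess : Continuous (fderiv ℝ (fderiv ℝ w)) :=
    (hw.contDiff.fderiv_right (m := 1) le_rfl).continuous_fderiv one_ne_zero
  obtain ⟨M, hM⟩ := hK.exists_bound_of_continuousOn (f := fderiv ℝ (fderiv ℝ w)) hhess.continuousOn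
  obtain ⟨q, hq, hqle⟩ := hK.exists_forall_le' (f := fun x => Real.exp (phase w x / k) * d) (a := 0)
    (((continuous_phase (hw.contDiff.of_le one_le_two)).div_const k).rexp.mul_const d).continuousOn
    fun x _ => by positivity
  refine ⟨k * d / ((|M| + 1) * (|M| + 1 + d)), by positivity,
    Fintype.card ι * (k * d / (q * (q + d))), fun x hx => ⟨?_, ?_⟩⟩
  · refine mul_norm_sq_le_weightedTrace_tensorSq fun i => ?_
    have hμ := hw.pos x i
    have hle : μ x i ≤ |M| + 1 := by
      linarith [hw.eigenvalue_le_norm x i, hM x hx, le_abs_self M]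
    rw [logRatioSlope]
    gcongr
  · rw [logLinearization, weightedTrace_innerForm, ← nsmul_eq_mul]
    refine Finset.sum_le_card_nsmul _ _ _ fun i _ => ?_
    have hμ := hw.pos x i
    have hle : q ≤ μ x i := (hqle x hx).trans (hw.exp_mul_le_eigenvalue hk hd.le i)
    rw [logRatioSlope]
    gcongr

theorem exists_phase_eq_const [FiniteDimensional ℝ E] (hw : IsLogShrinker k d w e μ) (hk : 0 < k)
    (hd : 0 < d) : ∃ m, ∀ x, phase w x = m := by
  have hconcave := hw.isConcaveShrinker hk.le hd.le
  obtain ⟨z, hz⟩ := hconcave.exists_forall_phase_le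
    (fun x _ hv => (hw.isEigenframe x).apply_apply_self_pos (hw.pos x) hv)
    (hw.phase_nonpos hk.le hd.le) (hw.logLinearization_fderiv_fderiv_le hk.le hd.le)
  exact ⟨phase w z, hconcave.phase_eq_of_forall_le (hw.isLocallyElliptic hk hd) hz⟩

end IsLogShrinker

/-- The function `u + t/2 ‖x‖²`, which has the phase of `u` and whose Hessian is shifted by `t`. -/
def shiftHessian (t : ℝ) (u : E → ℝ) (x : E) : ℝ :=
  u x + t / 2 * ‖x‖ ^ 2

lemma contDiff_shiftHessian {n : WithTop ℕ∞} {u : E → ℝ} (hu : ContDiff ℝ n u) (t : ℝ) :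
    ContDiff ℝ n (shiftHessian t u) :=
  hu.add (contDiff_const.mul (contDiff_norm_sq ℝ))

lemma fderiv_shiftHessian {u : E → ℝ} (hu : Differentiable ℝ u) (t : ℝ) :
    fderiv ℝ (shiftHessian t u) = fderiv ℝ u + ⇑(t • innerForm E) := by
  ext x v
  have h : HasFDerivAt (shiftHessian t u) _ x :=
    (hu x).hasFDerivAt.add ((hasStrictFDerivAt_norm_sq x).hasFDerivAt.const_mul (t / 2))
  simp [h.fderiv]
  ring

lemma fderiv_fderiv_shiftHessian {u : E → ℝ} (hu : ContDiff ℝ 2 u) (t : ℝ) (x : E) :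
    fderiv ℝ (fderiv ℝ (shiftHessian t u)) x = fderiv ℝ (fderiv ℝ u) x + t • innerForm E := by
  rw [fderiv_shiftHessian (hu.differentiable two_ne_zero),
    fderiv_add (differentiable_fderiv_of_contDiff_two hu x)
      (t • innerForm E).differentiableAt, ContinuousLinearMap.fderiv]

lemma phase_shiftHessian {u : E → ℝ} (hu : Differentiable ℝ u) (t : ℝ) (x : E) :
    phase (shiftHessian t u) x = phase u x := by
  rw [phase, fderiv_shiftHessian hu]
  simp only [phase, shiftHessian, Pi.add_apply, _root_.add_apply, _root_.smul_apply,
    innerForm_apply, real_inner_self_eq_norm_sq, smul_eq_mul]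
  ring

lemma phase_neg (u : E → ℝ) (x : E) : phase (-u) x = -phase u x := by
  simp only [phase, fderiv_neg, Pi.neg_apply, _root_.neg_apply]
  ring

theorem exists_phase_eq_const_of_eigenframe [FiniteDimensional ℝ E] {u : E → ℝ} {α β : ℝ}
    (hk : 0 < k) (hαβ : α < β) (hu : ContDiff ℝ 2 u)
    (hframe : ∀ x, IsEigenframe (fderiv ℝ (fderiv ℝ u) x) (e x) (μ x))
    (hpos : ∀ x i, 0 < μ x i + α)
    (hphase : ∀ x, phase u x = k * ∑ i, Real.log ((μ x i + α) / (μ x i + β))) :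
    ∃ m, ∀ x, phase u x = m := by
  have hu₁ := hu.differentiable two_ne_zero
  have hw : IsLogShrinker k (β - α) (shiftHessian α u) e fun x i => μ x i + α :=
    { contDiff := contDiff_shiftHessian hu α
      isEigenframe := fun x => by
        rw [fderiv_fderiv_shiftHessian hu]
        exact (hframe x).add_smul_innerForm α
      pos := hpos
      phase_eq := fun x => by
        rw [phase_shiftHessian hu₁, hphase, Finset.mul_sum]
        simp only [logRatio, add_assoc, add_sub_cancel] }
  simpa only [phase_shiftHessian hu₁] using hw.exists_phase_eq_const hk (sub_pos.2 hαβ)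

end LogShrinker

section Rigidity

lemma deriv_eq_of_eqOn_Ioi {f g : ℝ → ℝ} {t : ℝ} (hf : DifferentiableAt ℝ f t)
    (hg : DifferentiableAt ℝ g t) (hfg : Set.EqOn f g (Set.Ioi t)) : deriv f t = deriv g t := by
  have ht : f t = g t := tendsto_nhds_unique_of_eventuallyEq
    (hf.continuousAt.mono_left nhdsWithin_le_nhds) (hg.continuousAt.mono_left nhdsWithin_le_nhds)
    (hfg.eventuallyEq_of_mem self_mem_nhdsWithin)
  exact (uniqueDiffWithinAt_Ioi t).eq_deriv _ hf.hasDerivAt.hasDerivWithinAt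
    (hg.hasDerivAt.hasDerivWithinAt.congr hfg ht)

variable {E : Type*} [NormedAddCommGroup E] [NormedSpace ℝ E] {u : E → ℝ}

lemma rescale_eq_of_phase_eq_zero (hu : Differentiable ℝ u) (hphase : ∀ x, phase u x = 0) {s : ℝ}
    (hs : 0 < s) (x : E) : rescale u s x = u x := by
  have hderiv (t : ℝ) (ht : t ∈ Set.Ioi 0) : HasDerivAt (fun t => rescale u t x) 0 t := by
    simpa [hphase] using hasDerivAt_rescale hu x (ne_of_gt ht)
  have hconst := isOpen_Ioi.is_const_of_deriv_eq_zero isPreconnected_Ioi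
    (fun t ht => (hderiv t ht).differentiableAt.differentiableWithinAt)
    (fun t ht => (hderiv t ht).deriv) hs (Set.mem_Ioi.2 one_pos)
  simpa [rescale] using hconst

lemma eq_half_fderiv_fderiv_of_phase_eq_zero (hu : Differentiable ℝ u)
    (hu₂ : DifferentiableAt ℝ (fderiv ℝ u) 0) (hphase : ∀ x, phase u x = 0) (x : E) :
    u x = 1 / 2 * fderiv ℝ (fderiv ℝ u) 0 x x := by
  have hsnd : HasDerivAt (fun s : ℝ => fderiv ℝ u (s • x) x) (fderiv ℝ (fderiv ℝ u) 0 x x) 0 := by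
    simpa using hasDerivAt_fderiv_comp_add_smul (x := 0) (v := x) (t := 0) (by simpa using hu₂)
  have hlin : HasDerivAt (fun s : ℝ => s * (2 * u x)) (2 * u x) 0 := hasDerivAt_mul_const _
  have heq : Set.EqOn (fun s : ℝ => fderiv ℝ u (s • x) x) (fun s => s * (2 * u x))
      (Set.Ioi 0) := fun s (hs : 0 < s) => by
    have hscale := rescale_eq_of_phase_eq_zero hu hphase hs x
    have hs₀ := hphase (s • x)
    simp only [rescale, phase, map_smul, smul_eq_mul] at hscale hs₀
    rw [div_eq_iff (by positivity)] at hscale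
    exact mul_left_cancel₀ hs.ne' (by linarith)
  have h := deriv_eq_of_eqOn_Ioi hsnd.differentiableAt hlin.differentiableAt heq
  rw [hsnd.deriv, hlin.deriv] at h
  linarith

/-- Constant phase makes `u + m` invariant under parabolic rescaling, hence homogeneous of degree
two, and a homogeneous function of degree two that is twice differentiable at the origin is
quadratic. -/
theorem eq_quadratic_of_phase_eq_const (hu : Differentiable ℝ u)
    (hu₂ : DifferentiableAt ℝ (fderiv ℝ u) 0) {m : ℝ} (hphase : ∀ x, phase u x = m) (x : E) :
    u x = -m + 1 / 2 * fderiv ℝ (fderiv ℝ u) 0 x x := by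
  have hfderiv : (fderiv ℝ fun y => u y - -m) = fderiv ℝ u := funext fun _ => fderiv_sub_const _
  have h := eq_half_fderiv_fderiv_of_phase_eq_zero (hu.sub_const (-m)) (by rwa [hfderiv])
    (fun y => by rw [phase_sub_const, hphase, add_neg_cancel]) x
  rw [hfderiv] at h
  linarith

end Rigidity

section HessianMatrix

variable {n : ℕ} {u : EuclideanSpace ℝ (Fin n) → ℝ} {x : EuclideanSpace ℝ (Fin n)}

lemma hess_apply (u : EuclideanSpace ℝ (Fin n) → ℝ) (x : EuclideanSpace ℝ (Fin n)) (i j : Fin n) :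
    Hess n u x i j =
      fderiv ℝ (fderiv ℝ u) x (EuclideanSpace.single i 1) (EuclideanSpace.single j 1) := by
  simp [Hess, iteratedFDeriv_two_apply]

lemma isHermitian_hess (hu : ContDiff ℝ 2 u) (x : EuclideanSpace ℝ (Fin n)) :
    (Hess n u x).IsHermitian := by
  ext i j
  rw [conjTranspose_apply, star_trivial, hess_apply, hess_apply]
  exact hu.contDiffAt.isSymmSndFDerivAt (by simp) _ _

lemma fderiv_fderiv_apply_eq_sum_hess (u : EuclideanSpace ℝ (Fin n) → ℝ)
    (x v y : EuclideanSpace ℝ (Fin n)) :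
    fderiv ℝ (fderiv ℝ u) x v y = ∑ i, ∑ j, Hess n u x i j * v i * y j := by
  have hsum (v : EuclideanSpace ℝ (Fin n)) : ∑ i, v i • EuclideanSpace.single i (1 : ℝ) = v := by
    simpa using (EuclideanSpace.basisFun (Fin n) ℝ).sum_repr v
  conv_lhs => rw [← hsum v, ← hsum y]
  simp only [map_sum, map_smul, _root_.sum_apply, _root_.smul_apply, smul_eq_mul, Finset.mul_sum,
    hess_apply]
  rw [Finset.sum_comm]
  exact Finset.sum_congr rfl fun i _ => Finset.sum_congr rfl fun j _ => by ring

lemma isEigenframe_hess (h : (Hess n u x).IsHermitian) :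
    IsEigenframe (fderiv ℝ (fderiv ℝ u) x) h.eigenvectorBasis h.eigenvalues := fun i y => by
  have hvecMul : (h.eigenvectorBasis i : Fin n → ℝ) ᵥ* Hess n u x =
      h.eigenvalues i • (h.eigenvectorBasis i : Fin n → ℝ) := by
    rw [← h.mulVec_eigenvectorBasis, ← vecMul_transpose, ← conjTranspose_eq_transpose_of_trivial,
      h.eq]
  calc fderiv ℝ (fderiv ℝ u) x (h.eigenvectorBasis i) y
      = (h.eigenvectorBasis i : Fin n → ℝ) ᵥ* Hess n u x ⬝ᵥ y := by
        rw [fderiv_fderiv_apply_eq_sum_hess, Finset.sum_comm]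
        simp only [vecMul, dotProduct, Finset.sum_mul, mul_comm (Hess n u x _ _)]
    _ = h.eigenvalues i * ⟪h.eigenvectorBasis i, y⟫ := by
        rw [hvecMul, smul_dotProduct, smul_eq_mul, EuclideanSpace.inner_eq_star_dotProduct,
          star_trivial, dotProduct_comm]

lemma pos_of_posDef_of_mulVec_eq_smul {ι : Type*} [Fintype ι] {M : Matrix ι ι ℝ} (hM : M.PosDef)
    {v : ι → ℝ} (hv : v ≠ 0) {c : ℝ} (h : M *ᵥ v = c • v) : 0 < c := by
  have hpos := hM.dotProduct_mulVec_pos hv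
  rw [h, dotProduct_smul, smul_eq_mul] at hpos
  exact pos_of_mul_pos_left hpos (dotProduct_star_self_nonneg v)

lemma phase_eq_inner_gradient (u : EuclideanSpace ℝ (Fin n) → ℝ) (x : EuclideanSpace ℝ (Fin n)) :
    phase u x = -u x + 1 / 2 * ⟪x, gradient u x⟫ := by
  rw [inner_gradient_right, conj_trivial, phase]

end HessianMatrix

theorem exists_phase_eq_const_of_posDef {n : ℕ} {u : EuclideanSpace ℝ (Fin n) → ℝ}
    (hu : ContDiff ℝ 2 u) {k α β : ℝ} (hk : 0 < k) (hαβ : α < β)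
    (hherm : ∀ x, (Hess n u x).IsHermitian)
    (hphase : ∀ x, phase u x =
      k * ∑ i, Real.log (((hherm x).eigenvalues i + α) / ((hherm x).eigenvalues i + β)))
    (hadm : (∀ x, (Hess n u x + α • (1 : Matrix (Fin n) (Fin n) ℝ)).PosDef) ∨
      ∀ x, (-(β • (1 : Matrix (Fin n) (Fin n) ℝ)) - Hess n u x).PosDef) :
    ∃ m, ∀ x, phase u x = m := by
  have hne (x) (i) : ((hherm x).eigenvectorBasis i : Fin n → ℝ) ≠ 0 := fun h =>
    (hherm x).eigenvectorBasis.orthonormal.ne_zero i ((WithLp.ofLp_eq_zero 2).1 h)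
  rcases hadm with hlow | hupp
  · refine exists_phase_eq_const_of_eigenframe hk hαβ hu (fun x => isEigenframe_hess (hherm x))
      (fun x i => pos_of_posDef_of_mulVec_eq_smul (hlow x) (hne x i) ?_) hphase
    rw [add_mulVec, smul_mulVec, one_mulVec, (hherm x).mulVec_eigenvectorBasis, add_smul]
  · suffices h : ∃ m, ∀ x, phase (-u) x = m by
      obtain ⟨m, hm⟩ := h
      exact ⟨-m, fun x => by rw [← hm x, phase_neg, neg_neg]⟩
    refine exists_phase_eq_const_of_eigenframe hk (neg_lt_neg hαβ) hu.neg
      (e := fun x => (hherm x).eigenvectorBasis) (μ := fun x => -(hherm x).eigenvalues)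
      (fun x => ?_) (fun x i => pos_of_posDef_of_mulVec_eq_smul (hupp x) (hne x i) ?_) fun x => ?_
    · have hneg : fderiv ℝ (-u) = -fderiv ℝ u := funext fun _ => fderiv_neg
      rw [hneg, fderiv_neg]
      exact (isEigenframe_hess (hherm x)).neg
    · rw [sub_mulVec, neg_mulVec, smul_mulVec, one_mulVec, (hherm x).mulVec_eigenvectorBasis,
        Pi.neg_apply, add_smul, neg_smul, neg_smul, sub_eq_neg_add, add_comm]
    · rw [phase_neg, hphase, ← mul_neg, ← Finset.sum_neg_distrib]
      refine congrArg _ (Finset.sum_congr rfl fun i _ => ?_)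
      rw [← Real.log_inv, inv_div, Pi.neg_apply, ← neg_add, ← neg_add, neg_div_neg_eq]

theorem bernstein_tau_lt_pi_div_four_general {n : ℕ} {k a b : ℝ} (hk : 0 < k) (hb : 0 < b)
    {u : EuclideanSpace ℝ (Fin n) → ℝ} (hu : ContDiff ℝ 2 u)
    (heq : ∀ x, k * ∑ i, Real.log ((eigs (Hess n u x) i + a - b) / (eigs (Hess n u x) i + a + b))
      = -u x + 1 / 2 * ⟪x, gradient u x⟫)
    (hadm : (∀ x, (Hess n u x + (a - b) • (1 : Matrix (Fin n) (Fin n) ℝ)).PosDef) ∨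
      (∀ x, (-((a + b) • (1 : Matrix (Fin n) (Fin n) ℝ)) - Hess n u x).PosDef)) :
    IsQuadPoly n u ∧
    ∃ (A : Matrix (Fin n) (Fin n) ℝ) (hA : A.IsHermitian),
      ∀ x, u x = -k *
          (∑ i, Real.log ((hA.eigenvalues i + a - b) / (hA.eigenvalues i + a + b)))
        + 1 / 2 * (∑ i, ∑ j, A i j * x i * x j) := by
  have hherm := isHermitian_hess hu
  have hphase (x) : phase u x = k * ∑ i,
      Real.log (((hherm x).eigenvalues i + a - b) / ((hherm x).eigenvalues i + a + b)) := by
    simpa only [eigs, dif_pos (hherm x), phase_eq_inner_gradient] using (heq x).symm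
  obtain ⟨m, hm⟩ : ∃ m, ∀ x, phase u x = m :=
    exists_phase_eq_const_of_posDef hu hk (by linarith : a - b < a + b) hherm
      (by simpa only [← add_sub_assoc, ← add_assoc] using hphase) hadm
  have hquad (x) : u x = -m + 1 / 2 * ∑ i, ∑ j, Hess n u 0 i j * x i * x j := by
    rw [← fderiv_fderiv_apply_eq_sum_hess]
    exact eq_quadratic_of_phase_eq_const (hu.differentiable two_ne_zero)
      (differentiable_fderiv_of_contDiff_two hu 0) hm x
  refine ⟨⟨Hess n u 0, 0, -m, ?_, fun x => ?_⟩, Hess n u 0, hherm 0, fun x => ?_⟩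
  · exact (conjTranspose_eq_transpose_of_trivial _).symm.trans (hherm 0)
  · rw [hquad x, inner_zero_left, add_zero, add_comm]
  · rw [neg_mul, ← hphase 0, hm, hquad x]

theorem bernstein_tau_lt_pi_div_four (n : ℕ) (hn : 1 ≤ n) (a b : ℝ)
    (ha : 1 < a) (hb : b = Real.sqrt (a ^ 2 - 1))
    (u : EuclideanSpace ℝ (Fin n) → ℝ)
    (hu : ContDiff ℝ 2 u)
    (heq : ∀ x, (Real.sqrt (a ^ 2 + 1) / (2 * b)) *
        ∑ i, Real.log ((eigs (Hess n u x) i + a - b) / (eigs (Hess n u x) i + a + b))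
      = -u x + (1/2) * ⟪x, gradient u x⟫)
    (hadm : (∀ x, (Hess n u x + (a - b) • (1 : Matrix (Fin n) (Fin n) ℝ)).PosDef) ∨
      (∀ x, (-((a + b) • (1 : Matrix (Fin n) (Fin n) ℝ)) - Hess n u x).PosDef)) :
    IsQuadPoly n u ∧
    ∃ (A : Matrix (Fin n) (Fin n) ℝ) (hA : A.IsHermitian),
      ∀ x, u x = -(Real.sqrt (a ^ 2 + 1) / (2 * b)) *
          (∑ i, Real.log ((hA.eigenvalues i + a - b) / (hA.eigenvalues i + a + b)))
        + (1/2) * (∑ i, ∑ j, A i j * x i * x j) := by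
  have hb₀ : 0 < b := hb ▸ Real.sqrt_pos.2 (by nlinarith)
  exact bernstein_tau_lt_pi_div_four_general (by positivity) hb₀ hu heq hadm
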